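/- arXiv:2403.08617 — 3 statements merged into one kernel-verified Lean document; each statement's English description precedes it below -/
import Mathlib

section
/- For every C ∈ ℂ^{n×n} with n ≥ 1, the numerical range satisfies W(C) = { tr(CX) : X ∈ ℂ^{n×n} Hermitian positive semidefinite with tr(X) = 1 }. -/
open Matrix ComplexOrder

/-- The numerical range `W(C) = {x* C x : ‖x‖ = 1}` of a complex `n × n` matrix. -/
def numericalRange (n : ℕ) (C : Matrix (Fin n) (Fin n) ℂ) : Set ℂ :=
  {z | ∃ x : Fin n → ℂ, star x ⬝ᵥ x = 1 ∧ star x ⬝ᵥ C.mulVec x = z}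

lemma exists_phase (g : ℂ) : ∃ p : ℂ, star p * p = 1 ∧ (p * g).im = 0 := by
  by_cases hg : g = 0
  · exact ⟨1, by simp, by simp [hg]⟩
  · have hn : (‖g‖ : ℂ) ≠ 0 := by simpa using hg
    have h : star g * g = (‖g‖ : ℂ) ^ 2 := by
      simpa using Complex.conj_mul' g
    refine ⟨star g / ‖g‖, ?_, ?_⟩
    · have : star (star g / (‖g‖ : ℂ)) = g / ‖g‖ := by simp
      rw [this]
      field_simp
      rw [mul_comm, h]
    · have : star g / (‖g‖ : ℂ) * g = ((‖g‖ : ℝ) : ℂ) := by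
        field_simp
        rw [h]
      rw [this, Complex.ofReal_im]

lemma exists_isotropic {n : ℕ} (A : Matrix (Fin n) (Fin n) ℂ) (x y : Fin n → ℂ) (t : ℝ)
    (ht0 : 0 ≤ t) (ht1 : t ≤ 1)
    (hx : star x ⬝ᵥ x = 1) (hy : star y ⬝ᵥ y = 1)
    (hAx : star x ⬝ᵥ A *ᵥ x = -(t : ℂ)) (hAy : star y ⬝ᵥ A *ᵥ y = 1 - (t : ℂ)) :
    ∃ z : Fin n → ℂ, z ≠ 0 ∧ star z ⬝ᵥ A *ᵥ z = 0 := by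
  obtain ⟨p, hp, hpi⟩ := exists_phase (star y ⬝ᵥ A *ᵥ x - star (star x ⬝ᵥ A *ᵥ y))
  set α := star x ⬝ᵥ A *ᵥ y with hα
  set β := star y ⬝ᵥ A *ᵥ x with hβ
  obtain ⟨r, hr⟩ : ∃ r : ℝ, star p * α + p * β = (r : ℂ) := by
    refine ⟨(star p * α + p * β).re, ?_⟩
    apply Complex.ext
    · simp
    · simp at hpi ⊢
      linarith
  have key : ∃ s ∈ Set.Icc (0 : ℝ) 1,
      (fun s : ℝ => -t * (1 - s) ^ 2 + (1 - t) * s ^ 2 + s * (1 - s) * r) s = 0 := by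
    apply intermediate_value_Icc (zero_le_one)
    · fun_prop
    · constructor <;> norm_num <;> assumption
  obtain ⟨s, -, hs⟩ := key
  simp only at hs
  refine ⟨((1 - s : ℝ) : ℂ) • p • x + (s : ℂ) • y, ?_, ?_⟩
  · intro hz
    have e : ((1 - s : ℝ) : ℂ) • p • x = -((s : ℂ) • y) := eq_neg_of_add_eq_zero_left hz
    have e1 : star (((1 - s : ℝ) : ℂ) • p • x) ⬝ᵥ (((1 - s : ℝ) : ℂ) • p • x)
        = star (-((s : ℂ) • y)) ⬝ᵥ (-((s : ℂ) • y)) := by rw [e]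
    have e2 : star (((1 - s : ℝ) : ℂ) • p • x) ⬝ᵥ A *ᵥ (((1 - s : ℝ) : ℂ) • p • x)
        = star (-((s : ℂ) • y)) ⬝ᵥ A *ᵥ (-((s : ℂ) • y)) := by rw [e]
    have hc (u : ℝ) : star (u : ℂ) = u := Complex.conj_ofReal u
    simp only [star_smul, star_neg, mulVec_neg, mulVec_smul, neg_dotProduct, dotProduct_neg,
      smul_dotProduct, dotProduct_smul, smul_eq_mul, hx, hy, hAx, hAy, hc] at e1 e2
    have f1 : ((1 - s : ℝ) : ℂ) ^ 2 = (s : ℂ) ^ 2 := by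
      linear_combination e1 - ((1 - s : ℝ) : ℂ) ^ 2 * hp
    have f2 : ((1 - s : ℝ) : ℂ) ^ 2 * (-(t : ℂ)) = (s : ℂ) ^ 2 * (1 - (t : ℂ)) := by
      linear_combination e2 + ((1 - s : ℝ) : ℂ) ^ 2 * t * hp
    norm_cast at f1 f2
    nlinarith
  · have hc (u : ℝ) : star (u : ℂ) = u := Complex.conj_ofReal u
    simp only [star_add, star_smul, mulVec_add, mulVec_smul, add_dotProduct, dotProduct_add,
      smul_dotProduct, dotProduct_smul, smul_eq_mul, hAx, hAy, hc, ← hα, ← hβ]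
    have hs' : -(t : ℂ) * (1 - s) ^ 2 + (1 - t) * s ^ 2 + s * (1 - s) * r = 0 := by
      exact_mod_cast hs
    push_cast
    linear_combination hs' - (1 - (s : ℂ)) ^ 2 * t * hp + s * (1 - (s : ℂ)) * hr

lemma convex_numericalRange (n : ℕ) (C : Matrix (Fin n) (Fin n) ℂ) :
    Convex ℝ (numericalRange n C) := by
  rintro a ⟨x, hx, hxa⟩ b ⟨y, hy, hyb⟩ u t hu ht hut
  by_cases hab : a = b
  · subst hab
    rw [← add_smul, hut, one_smul]
    exact ⟨x, hx, hxa⟩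
  have hba : b - a ≠ 0 := sub_ne_zero.2 (Ne.symm hab)
  obtain rfl : u = 1 - t := by linarith
  set w : ℂ := (1 - t : ℝ) • a + t • b with hw
  have hw' : w = (1 - (t : ℂ)) * a + t * b := by
    rw [hw]; simp
  have form (z : Fin n → ℂ) : star z ⬝ᵥ ((b - a)⁻¹ • (C - w • (1 : Matrix _ _ ℂ))) *ᵥ z
      = (b - a)⁻¹ * (star z ⬝ᵥ C *ᵥ z - w * (star z ⬝ᵥ z)) := by
    simp [smul_mulVec, sub_mulVec, dotProduct_sub]
  obtain ⟨z, hz, hAz⟩ := exists_isotropic ((b - a)⁻¹ • (C - w • (1 : Matrix _ _ ℂ))) x y t ht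
    (by linarith) hx hy
    (by rw [form, hx, hxa, hw']; field_simp; ring)
    (by rw [form, hy, hyb, hw']; field_simp; ring)
  rw [form] at hAz
  have hAz' : star z ⬝ᵥ C *ᵥ z = w * (star z ⬝ᵥ z) := by
    rcases mul_eq_zero.1 hAz with h | h
    · exact absurd h (inv_ne_zero hba)
    · exact sub_eq_zero.1 h
  have hpos : 0 < star z ⬝ᵥ z := dotProduct_star_self_pos_iff.2 hz
  obtain ⟨m, hm, hmz⟩ : ∃ m : ℝ, 0 < m ∧ star z ⬝ᵥ z = (m : ℂ) := by
    refine ⟨(star z ⬝ᵥ z).re, (Complex.pos_iff.1 hpos).1, ?_⟩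
    apply Complex.ext
    · simp
    · rw [← (Complex.pos_iff.1 hpos).2]; simp
  have hc : star (((Real.sqrt m)⁻¹ : ℝ) : ℂ) = (((Real.sqrt m)⁻¹ : ℝ) : ℂ) := Complex.conj_ofReal _
  have hq : (((Real.sqrt m)⁻¹ : ℝ) : ℂ) * ((((Real.sqrt m)⁻¹ : ℝ) : ℂ) * m) = 1 := by
    norm_cast
    rw [← mul_assoc, ← mul_inv, Real.mul_self_sqrt hm.le, inv_mul_cancel₀ hm.ne']
  refine ⟨(((Real.sqrt m)⁻¹ : ℝ) : ℂ) • z, ?_, ?_⟩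
  · simp only [star_smul, smul_dotProduct, dotProduct_smul, smul_eq_mul, hc, hmz, hq]
  · simp only [star_smul, smul_dotProduct, dotProduct_smul, mulVec_smul, smul_eq_mul, hc, hAz', hmz]
    linear_combination w * hq

/-- SDP representation of the numerical range:
`W(C) = { tr(CX) : X Hermitian PSD, tr(X) = 1 }`. -/
theorem numericalRange_eq_SDP (n : ℕ) (hn : 1 ≤ n) (C : Matrix (Fin n) (Fin n) ℂ) :
    numericalRange n C =
      {z | ∃ X : Matrix (Fin n) (Fin n) ℂ, X.PosSemidef ∧ X.trace = 1 ∧ (C * X).trace = z} := by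
  ext z
  constructor
  · rintro ⟨x, hx, rfl⟩
    refine ⟨vecMulVec x (star x), posSemidef_vecMulVec_self_star x, ?_, ?_⟩
    · rw [trace_vecMulVec, dotProduct_comm, hx]
    · rw [mul_vecMulVec, trace_vecMulVec, dotProduct_comm]
  · rintro ⟨X, hX, htr, rfl⟩
    set U : Matrix (Fin n) (Fin n) ℂ := hX.1.eigenvectorUnitary.1 with hU
    have hUU : star U * U = 1 := Unitary.coe_star_mul_self hX.1.eigenvectorUnitary
    have hXU : X = U * diagonal (fun i => (hX.1.eigenvalues i : ℂ)) * star U := by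
      have := hX.1.spectral_theorem
      rw [Unitary.conjStarAlgAut_apply] at this
      exact this
    have hsum : ∑ i, hX.1.eigenvalues i = 1 := by
      have h := hX.1.trace_eq_sum_eigenvalues
      rw [htr] at h
      have h' : (1 : ℂ) = ∑ i, (hX.1.eigenvalues i : ℂ) := h
      exact_mod_cast h'.symm
    have htrC : (C * X).trace
        = ∑ i, hX.1.eigenvalues i • (star (fun j => U j i) ⬝ᵥ C *ᵥ (fun j => U j i)) := by
      have h1 : (C * X).trace = (star U * (C * U) * diagonal (fun i => (hX.1.eigenvalues i : ℂ))).trace := by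
        conv_lhs => rw [hXU]
        rw [← mul_assoc, trace_mul_comm]
        simp only [mul_assoc]
      rw [h1, trace]
      refine Finset.sum_congr rfl fun i _ => ?_
      rw [diag_apply, mul_diagonal, mul_comm, Complex.real_smul]
      rfl
    rw [htrC]
    refine (convex_numericalRange n C).sum_mem (fun i _ => hX.eigenvalues_nonneg i) hsum ?_
    intro i _
    refine ⟨fun j => U j i, ?_, rfl⟩
    have := congrFun (congrFun hUU i) i
    rw [one_apply_eq] at this
    exact this
end

section
/- For every C ∈ ℂ^{n×n} with n ≥ 1, the numerical range W(C) is a compact convex subset of ℂ. -/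
open Matrix

theorem nr_self {n : ℕ} (v : Fin n → ℂ) :
    star v ⬝ᵥ v = ((∑ i, ‖v i‖ ^ 2 : ℝ) : ℂ) := by
  simp only [dotProduct, Pi.star_apply, Complex.ofReal_sum]
  refine Finset.sum_congr rfl fun i _ => ?_
  rw [Complex.star_def, Complex.conj_mul']
  push_cast
  rfl

theorem nr_compact (n : ℕ) (C : Matrix (Fin n) (Fin n) ℂ) :
    IsCompact (numericalRange n C) := by
  have h1 : IsCompact {x : Fin n → ℂ | star x ⬝ᵥ x = 1} := by
    refine IsCompact.of_isClosed_subset (isCompact_closedBall (0 : Fin n → ℂ) 1) ?_ ?_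
    · exact isClosed_eq (by fun_prop) continuous_const
    · intro x hx
      rw [Set.mem_setOf_eq, nr_self] at hx
      have hx' : ∑ i, ‖x i‖ ^ 2 = 1 := by exact_mod_cast hx
      rw [mem_closedBall_zero_iff, pi_norm_le_iff_of_nonneg zero_le_one]
      intro i
      have := Finset.single_le_sum (f := fun i => ‖x i‖ ^ 2) (fun j _ => sq_nonneg _)
        (Finset.mem_univ i)
      have h0 := norm_nonneg (x i)
      nlinarith
  have h2 := h1.image (f := fun x => star x ⬝ᵥ C.mulVec x) (by fun_prop)
  exact h2

theorem nr_phase (β γ : ℂ) : ∃ w : ℂ, star w * w = 1 ∧ ∃ g : ℝ, w * β + star w * γ = g := by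
  by_cases h : β - star γ = 0
  · refine ⟨1, by simp, 2 * β.re, ?_⟩
    have : γ = star β := by rw [sub_eq_zero.mp h, star_star]
    subst this
    simpa using Complex.add_conj β
  · set d := β - star γ with hd
    have hn : (‖d‖ : ℂ) ≠ 0 := by simpa using h
    have hdd : star d * d = (‖d‖ : ℂ) ^ 2 := Complex.conj_mul' d
    refine ⟨star d / ‖d‖, ?_, ?_⟩
    · simp only [Complex.star_def, map_div₀, Complex.conj_conj, Complex.conj_ofReal] at *
      field_simp
      linear_combination hdd
    · have hβ : β = d + star γ := by simp [hd]
      refine ⟨‖d‖ + 2 * (d * γ / ‖d‖).re, ?_⟩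
      have := Complex.add_conj (d * γ / ‖d‖)
      push_cast at this ⊢
      rw [← this, hβ]
      simp only [Complex.star_def, map_div₀, map_mul, Complex.conj_conj, Complex.conj_ofReal] at *
      field_simp
      linear_combination hdd

theorem nr_expand {n : ℕ} (D : Matrix (Fin n) (Fin n) ℂ) (x y : Fin n → ℂ) (c : ℂ) :
    star (x + c • y) ⬝ᵥ D.mulVec (x + c • y) =
      star x ⬝ᵥ D.mulVec x + (c * (star x ⬝ᵥ D.mulVec y) + star c * (star y ⬝ᵥ D.mulVec x))
        + star c * c * (star y ⬝ᵥ D.mulVec y) := by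
  simp only [star_add, star_smul, mulVec_add, mulVec_smul, add_dotProduct, dotProduct_add,
    smul_dotProduct, dotProduct_smul, smul_eq_mul]
  ring

theorem nr_key {n : ℕ} (D : Matrix (Fin n) (Fin n) ℂ) (x y : Fin n → ℂ)
    (hx : star x ⬝ᵥ x = 1) (hy : star y ⬝ᵥ y = 1)
    (hDx : star x ⬝ᵥ D.mulVec x = 0) (hDy : star y ⬝ᵥ D.mulVec y = 1)
    (t : ℝ) (ht0 : 0 ≤ t) (ht1 : t < 1) :
    ∃ v : Fin n → ℂ, star v ⬝ᵥ v = 1 ∧ star v ⬝ᵥ D.mulVec v = t := by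
  obtain ⟨w, hw, g, hg⟩ := nr_phase (star x ⬝ᵥ D.mulVec y) (star y ⬝ᵥ D.mulVec x)
  obtain ⟨h, hh⟩ : ∃ h : ℝ, w * (star x ⬝ᵥ y) + star w * (star y ⬝ᵥ x) = h := by
    refine ⟨2 * (w * (star x ⬝ᵥ y)).re, ?_⟩
    have h1 := Complex.add_conj (w * (star x ⬝ᵥ y))
    have h2 : star y ⬝ᵥ x = star (star x ⬝ᵥ y) := by
      rw [star_dotProduct, dotProduct_comm] <;> simp [dotProduct_comm]
    rw [h2, ← h1, map_mul]
    rfl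
  obtain ⟨b, hb⟩ : ∃ b : ℝ, (1 - t) * (b * b) + (g - t * h) * b + (-t) = 0 := by
    have hd : 0 ≤ discrim (1 - t) (g - t * h) (-t) := by
      unfold discrim
      nlinarith [sq_nonneg (g - t * h), mul_nonneg ht0 (sub_pos.mpr ht1).le]
    exact exists_quadratic_eq_zero (sub_pos.mpr ht1).ne'
      ⟨Real.sqrt (discrim (1 - t) (g - t * h) (-t)), (Real.mul_self_sqrt hd).symm⟩
  have hbC : (1 - (t : ℂ)) * (b * b) + (g - t * h) * b + (-t) = 0 := by exact_mod_cast hb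
  set v : Fin n → ℂ := x + ((b : ℂ) * w) • y with hv
  have hsc : star ((b : ℂ) * w) = b * star w := by simp
  have hDv : star v ⬝ᵥ D.mulVec v = b * g + b * b := by
    rw [hv, nr_expand, hDx, hDy, hsc]
    linear_combination (b : ℂ) * hg + (b : ℂ) * b * hw
  have hNv : star v ⬝ᵥ v = 1 + b * h + b * b := by
    have := nr_expand 1 x y ((b : ℂ) * w)
    simp only [one_mulVec] at this
    rw [hv, this, hx, hy, hsc]
    linear_combination (b : ℂ) * hh + (b : ℂ) * b * hw
  have hrel : star v ⬝ᵥ D.mulVec v = t * (star v ⬝ᵥ v) := by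
    rw [hDv, hNv]; linear_combination hbC
  have hvne : v ≠ 0 := by
    intro h0
    have hx' : x = (-((b : ℂ) * w)) • y := by
      rw [neg_smul]; exact eq_neg_of_add_eq_zero_left (hv ▸ h0)
    have h3 : star x ⬝ᵥ D.mulVec x = b * b := by
      rw [hx']
      simp only [star_smul, mulVec_smul, smul_dotProduct, dotProduct_smul, smul_eq_mul, hDy,
        star_neg, hsc]
      linear_combination (b : ℂ) * b * hw
    rw [hDx] at h3
    have hb0 : (b : ℂ) = 0 := mul_self_eq_zero.mp h3.symm
    rw [hb0] at hx'
    rw [hx'] at hx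
    simp at hx
  have hS := nr_self v
  set S : ℝ := ∑ i, ‖v i‖ ^ 2 with hSdef
  have hS0 : 0 ≤ S := Finset.sum_nonneg fun i _ => sq_nonneg _
  have hSne : S ≠ 0 := by
    intro h0
    apply hvne
    funext i
    have h4 := (Finset.sum_eq_zero_iff_of_nonneg (fun i _ => sq_nonneg ‖v i‖)).mp
      (hSdef ▸ h0) i (Finset.mem_univ i)
    simpa using h4
  have hr : (Real.sqrt S : ℂ) * Real.sqrt S = S := by
    exact_mod_cast Real.mul_self_sqrt hS0
  have hrne : (Real.sqrt S : ℂ) ≠ 0 := by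
    intro h0
    rw [h0] at hr
    apply hSne
    have : (S : ℂ) = 0 := by rw [← hr]; simp
    exact_mod_cast this
  have hsr : star ((Real.sqrt S : ℂ)⁻¹) = (Real.sqrt S : ℂ)⁻¹ := by simp
  refine ⟨(Real.sqrt S : ℂ)⁻¹ • v, ?_, ?_⟩
  · simp only [star_smul, smul_dotProduct, dotProduct_smul, smul_eq_mul, hsr, hS]
    rw [← hr]
    field_simp
  · simp only [star_smul, mulVec_smul, smul_dotProduct, dotProduct_smul, smul_eq_mul, hsr, hrel, hS]
    rw [← hr]
    field_simp

/-- Hausdorff–Töplitz: the numerical range is a compact convex subset of `ℂ`. -/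
theorem numericalRange_isCompact_convex (n : ℕ) (hn : 1 ≤ n)
    (C : Matrix (Fin n) (Fin n) ℂ) :
    IsCompact (numericalRange n C) ∧ Convex ℝ (numericalRange n C) := by
  refine ⟨nr_compact n C, ?_⟩
  rintro p ⟨x, hx, hp⟩ q ⟨y, hy, hq⟩ a b ha hb hab
  have habC : (a : ℂ) + b = 1 := by exact_mod_cast hab
  by_cases hpq : q - p = 0
  · refine ⟨x, hx, ?_⟩
    rw [hp, Complex.real_smul, Complex.real_smul]
    linear_combination (-(b : ℂ)) * hpq - p * habC
  by_cases hb1 : b < 1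
  · have hD : ∀ v : Fin n → ℂ, star v ⬝ᵥ ((q - p)⁻¹ • (C - p • 1)).mulVec v =
        (q - p)⁻¹ * (star v ⬝ᵥ C.mulVec v - p * (star v ⬝ᵥ v)) := by
      intro v
      simp only [smul_mulVec, sub_mulVec, one_mulVec, dotProduct_smul, dotProduct_sub,
        smul_eq_mul]
    obtain ⟨v, hv, hvD⟩ := nr_key ((q - p)⁻¹ • (C - p • 1)) x y hx hy
      (by rw [hD, hp, hx]; ring) (by rw [hD, hq, hy, mul_one]; exact inv_mul_cancel₀ hpq) b hb hb1
    refine ⟨v, hv, ?_⟩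
    rw [hD, hv, inv_mul_eq_iff_eq_mul₀ hpq] at hvD
    rw [Complex.real_smul, Complex.real_smul]
    linear_combination hvD - p * habC
  · have hb' : b = 1 := by linarith
    have ha' : a = 0 := by linarith
    refine ⟨y, hy, ?_⟩
    simp [hb', ha', hq]
end

section
/- Let n ≥ 1 and C ∈ ℂ^{n×n}, write (1/n)·tr(C) = x + iy with x, y real, set c = ⌈‖C‖_F⌉ and S = [[c + 1 + x, y], [y, c + 1 − x]] ∈ ℝ^{2×2}, and let G = diag((1/n)·I_{2n}, S, 1) ∈ ℝ^{(2n+3)×(2n+3)}. Then G is positive definite, and every real symmetric block-diagonal matrix Z = diag(Y, T, τ), with Y ∈ ℝ^{2n×2n} symmetric, T ∈ ℝ^{2×2} symmetric and τ ∈ ℝ, satisfying ‖Z − G‖_F ≤ 1/n, is positive semidefinite. -/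
open Matrix

/-- The Frobenius norm `‖C‖_F = √tr(C*C)` of a complex matrix. -/
noncomputable def frobNorm (n : ℕ) (C : Matrix (Fin n) (Fin n) ℂ) : ℝ :=
  Real.sqrt (Cᴴ * C).trace.re

/-- The block diagonal matrix `diag(Y, T, τ)` of size `(2n+3) × (2n+3)`. -/
noncomputable def blockDiag3 (n : ℕ) (Y : Matrix (Fin (2 * n)) (Fin (2 * n)) ℝ)
    (T : Matrix (Fin 2) (Fin 2) ℝ) (τ : ℝ) :
    Matrix (Fin (2 * n) ⊕ (Fin 2 ⊕ Fin 1)) (Fin (2 * n) ⊕ (Fin 2 ⊕ Fin 1)) ℝ :=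
  Matrix.fromBlocks Y 0 0 (Matrix.fromBlocks T 0 0 (τ • (1 : Matrix (Fin 1) (Fin 1) ℝ)))

/-- The Frobenius norm `‖M‖_F = √tr(MᵀM)` of a real `(2n+3) × (2n+3)` matrix. -/
noncomputable def frobNormB (n : ℕ)
    (M : Matrix (Fin (2 * n) ⊕ (Fin 2 ⊕ Fin 1)) (Fin (2 * n) ⊕ (Fin 2 ⊕ Fin 1)) ℝ) : ℝ :=
  Real.sqrt (Mᵀ * M).trace

lemma aux_trace_sq {ι : Type*} [Fintype ι] (M : Matrix ι ι ℝ) :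
    (Mᵀ * M).trace = ∑ p : ι × ι, M p.1 p.2 ^ 2 := by
  rw [Fintype.sum_prod_type, Finset.sum_comm]
  simp [Matrix.trace, Matrix.mul_apply, sq]

lemma aux_lower {ι : Type*} [Fintype ι] (M : Matrix ι ι ℝ) (v : ι → ℝ) :
    -(Real.sqrt (Mᵀ * M).trace * (v ⬝ᵥ v)) ≤ v ⬝ᵥ M *ᵥ v := by
  have e1 : v ⬝ᵥ M *ᵥ v = ∑ p : ι × ι, M p.1 p.2 * (v p.1 * v p.2) := by
    rw [Fintype.sum_prod_type]
    simp only [dotProduct, mulVec, Finset.mul_sum]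
    refine Finset.sum_congr rfl fun i _ => Finset.sum_congr rfl fun j _ => by ring
  have e2 : ∑ p : ι × ι, (v p.1 * v p.2) ^ 2 = (v ⬝ᵥ v) ^ 2 := by
    rw [Fintype.sum_prod_type, sq (v ⬝ᵥ v)]
    simp only [dotProduct, Finset.sum_mul_sum]
    refine Finset.sum_congr rfl fun i _ => Finset.sum_congr rfl fun j _ => by ring
  have cs := Finset.sum_mul_sq_le_sq_mul_sq Finset.univ
    (fun p : ι × ι => M p.1 p.2) (fun p => v p.1 * v p.2)
  rw [← e1, e2, ← aux_trace_sq] at cs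
  have hv : 0 ≤ v ⬝ᵥ v := Finset.sum_nonneg fun i _ => mul_self_nonneg (v i)
  have ht : 0 ≤ (Mᵀ * M).trace := by
    rw [aux_trace_sq]; exact Finset.sum_nonneg fun i _ => sq_nonneg _
  refine (abs_le_of_sq_le_sq' ?_ (by positivity)).1
  rw [mul_pow, Real.sq_sqrt ht]
  exact cs

lemma aux_xy (n : ℕ) (hn : 1 ≤ n)
    (C : Matrix (Fin n) (Fin n) ℂ) (x y : ℝ)
    (hxy : (n : ℂ)⁻¹ * C.trace = (x : ℂ) + (y : ℂ) * Complex.I) :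
    x ^ 2 + y ^ 2 ≤ (⌈frobNorm n C⌉ : ℝ) ^ 2 ∧ 0 ≤ (⌈frobNorm n C⌉ : ℝ) := by
  have h0 : 0 ≤ frobNorm n C := Real.sqrt_nonneg _
  have hc : frobNorm n C ≤ (⌈frobNorm n C⌉ : ℝ) := Int.le_ceil _
  have e1 : (Cᴴ * C).trace.re = ∑ j, ∑ i, ‖C i j‖ ^ 2 := by
    simp only [Matrix.trace, Matrix.diag_apply, Matrix.mul_apply, Complex.re_sum,
      Matrix.conjTranspose_apply]
    refine Finset.sum_congr rfl fun i _ => Finset.sum_congr rfl fun j _ => ?_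
    rw [← Complex.normSq_eq_norm_sq, Complex.normSq_apply]
    simp
  have hF : frobNorm n C ^ 2 = ∑ j, ∑ i, ‖C i j‖ ^ 2 := by
    rw [frobNorm, Real.sq_sqrt, e1]
    rw [e1]; positivity
  have h1 : ∑ i, ‖C i i‖ ^ 2 ≤ frobNorm n C ^ 2 := by
    rw [hF]
    refine Finset.sum_le_sum fun j _ => ?_
    exact Finset.single_le_sum (f := fun i => ‖C i j‖ ^ 2) (fun i _ => by positivity)
      (Finset.mem_univ j)
  have h2 : ‖C.trace‖ ≤ ∑ i, ‖C i i‖ := norm_sum_le _ _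
  have h3 : (∑ i, ‖C i i‖) ^ 2 ≤ n * ∑ i, ‖C i i‖ ^ 2 := by
    simpa using sq_sum_le_card_mul_sum_sq (s := Finset.univ) (f := fun i => ‖C i i‖)
  have h4 : ‖C.trace‖ ^ 2 ≤ n * frobNorm n C ^ 2 := by
    calc ‖C.trace‖ ^ 2 ≤ (∑ i, ‖C i i‖) ^ 2 := by gcongr
      _ ≤ _ := h3
      _ ≤ _ := by gcongr
  have hn' : (1 : ℝ) ≤ n := by exact_mod_cast hn
  have h5 : x ^ 2 + y ^ 2 = ((n : ℝ)⁻¹ * ‖C.trace‖) ^ 2 := by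
    have := congrArg (fun z => ‖z‖ ^ 2) hxy
    simp only [norm_mul, norm_inv, Complex.norm_natCast] at this
    rw [this, ← Complex.normSq_eq_norm_sq, Complex.normSq_add_mul_I]
  refine ⟨?_, h0.trans hc⟩
  have h6 : ((n : ℝ)⁻¹ * ‖C.trace‖) ^ 2 ≤ frobNorm n C ^ 2 := by
    rw [mul_pow, inv_pow, inv_mul_le_iff₀ (by positivity)]
    refine h4.trans ?_
    gcongr
    nlinarith
  rw [h5]
  exact h6.trans (by gcongr)

lemma aux_G (n : ℕ) (hn : 1 ≤ n) (c x y : ℝ) (h : x ^ 2 + y ^ 2 ≤ c ^ 2) (hc : 0 ≤ c)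
    (v : Fin (2 * n) ⊕ (Fin 2 ⊕ Fin 1) → ℝ) :
    1 / (n : ℝ) * (v ⬝ᵥ v) ≤
     v ⬝ᵥ (blockDiag3 n ((n : ℝ)⁻¹ • (1 : Matrix (Fin (2 * n)) (Fin (2 * n)) ℝ))
        !![c + 1 + x, y; y, c + 1 - x] 1) *ᵥ v := by
  have hn' : (n : ℝ)⁻¹ ≤ 1 := inv_le_one_of_one_le₀ (by exact_mod_cast hn)
  obtain ⟨a, w, rfl⟩ : ∃ a w, v = Sum.elim a w := ⟨v ∘ Sum.inl, v ∘ Sum.inr, by simp⟩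
  obtain ⟨b, d, rfl⟩ : ∃ b d, w = Sum.elim b d := ⟨w ∘ Sum.inl, w ∘ Sum.inr, by simp⟩
  unfold blockDiag3
  simp only [fromBlocks_mulVec, Sum.elim_comp_inl, Sum.elim_comp_inr, zero_mulVec,
    sumElim_dotProduct_sumElim, add_zero, zero_add, smul_mulVec, one_mulVec, dotProduct_smul,
    smul_eq_mul, one_div, one_mul]
  have hd : 0 ≤ d ⬝ᵥ d := Finset.sum_nonneg fun i _ => mul_self_nonneg (d i)
  have hb : 0 ≤ b ⬝ᵥ b := Finset.sum_nonneg fun i _ => mul_self_nonneg (b i)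
  have hS : b ⬝ᵥ b ≤ b ⬝ᵥ !![c + 1 + x, y; y, c + 1 - x] *ᵥ b := by
    simp only [dotProduct, mulVec, Fin.sum_univ_two, Matrix.of_apply, Matrix.cons_val', Matrix.cons_val_zero,
      Matrix.cons_val_one, Matrix.cons_val_fin_one]
    generalize b 0 = p
    generalize b 1 = q
    have key : -(c * (p ^ 2 + q ^ 2)) ≤ x * (p ^ 2 - q ^ 2) + y * (2 * p * q) := by
      refine (abs_le_of_sq_le_sq' ?_ (by positivity)).1
      have : (p ^ 2 + q ^ 2) ^ 2 * (x ^ 2 + y ^ 2) ≤ (p ^ 2 + q ^ 2) ^ 2 * c ^ 2 := by gcongr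
      nlinarith [sq_nonneg (x * (2 * p * q) - y * (p ^ 2 - q ^ 2))]
    nlinarith
  nlinarith [mul_le_mul_of_nonneg_right hn' hd, mul_le_mul_of_nonneg_right hn' hb]

lemma aux_symm (n : ℕ) (Y : Matrix (Fin (2 * n)) (Fin (2 * n)) ℝ) (T : Matrix (Fin 2) (Fin 2) ℝ)
    (τ : ℝ) (hY : Y.IsSymm) (hT : T.IsSymm) : (blockDiag3 n Y T τ).IsHermitian := by
  rw [Matrix.IsHermitian, Matrix.conjTranspose_eq_transpose_of_trivial, blockDiag3]
  simp [fromBlocks_transpose, hY.eq, hT.eq]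

/-- The matrix `G = diag((1/n)·I_{2n}, S, 1)` is positive definite, and every real symmetric
block diagonal matrix `Z = diag(Y, T, τ)` with `‖Z − G‖_F ≤ 1/n` is positive semidefinite. -/
theorem G_posDef_and_ball_posSemidef (n : ℕ) (hn : 1 ≤ n)
    (C : Matrix (Fin n) (Fin n) ℂ) (x y : ℝ)
    (hxy : (n : ℂ)⁻¹ * C.trace = (x : ℂ) + (y : ℂ) * Complex.I) :
    (blockDiag3 n ((n : ℝ)⁻¹ • (1 : Matrix (Fin (2 * n)) (Fin (2 * n)) ℝ))
        !![(⌈frobNorm n C⌉ : ℝ) + 1 + x, y; y, (⌈frobNorm n C⌉ : ℝ) + 1 - x] 1).PosDef ∧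
    ∀ (Y : Matrix (Fin (2 * n)) (Fin (2 * n)) ℝ) (T : Matrix (Fin 2) (Fin 2) ℝ) (τ : ℝ),
      Y.IsSymm → T.IsSymm →
      frobNormB n (blockDiag3 n Y T τ -
        blockDiag3 n ((n : ℝ)⁻¹ • (1 : Matrix (Fin (2 * n)) (Fin (2 * n)) ℝ))
          !![(⌈frobNorm n C⌉ : ℝ) + 1 + x, y; y, (⌈frobNorm n C⌉ : ℝ) + 1 - x] 1) ≤ 1 / n →
      (blockDiag3 n Y T τ).PosSemidef := by
  obtain ⟨h, hc⟩ := aux_xy n hn C x y hxy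
  have hG := aux_G n hn _ x y h hc
  have hn' : 0 < 1 / (n : ℝ) := by
    have : (0 : ℝ) < n := by exact_mod_cast hn
    positivity
  refine ⟨Matrix.PosDef.of_dotProduct_mulVec_pos ?_ ?_, ?_⟩
  · apply aux_symm
    · simp [Matrix.IsSymm]
    · ext i j
      fin_cases i <;> fin_cases j <;> rfl
  · intro v hv
    rw [star_trivial]
    refine lt_of_lt_of_le (mul_pos hn' ?_) (hG v)
    have := Matrix.dotProduct_star_self_pos_iff.2 hv
    rwa [star_trivial] at this
  · intro Y T τ hY hT hZ
    refine Matrix.PosSemidef.of_dotProduct_mulVec_nonneg (aux_symm n Y T τ hY hT) fun v => ?_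
    rw [star_trivial]
    have h1 := hG v
    have h2 := aux_lower (blockDiag3 n Y T τ -
        blockDiag3 n ((n : ℝ)⁻¹ • (1 : Matrix (Fin (2 * n)) (Fin (2 * n)) ℝ))
          !![(⌈frobNorm n C⌉ : ℝ) + 1 + x, y; y, (⌈frobNorm n C⌉ : ℝ) + 1 - x] 1) v
    rw [Matrix.sub_mulVec, dotProduct_sub] at h2
    have hv : 0 ≤ v ⬝ᵥ v := Finset.sum_nonneg fun i _ => mul_self_nonneg (v i)
    have h3 := mul_le_mul_of_nonneg_right hZ hv
    unfold frobNormB at h3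
    linarith
end
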